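/- For any graphs G and H, γ(G □ H) ≥ (1/2)·γ(G)·γ(H) + (1/2)·min{γ(G), γ(H)}. -/

import Mathlib

/-!
Suppose `H` has a vertex and `G □ H` a finite minimum dominating set `D`; then the projection of `D`
to `G` dominates `G`. Let `U` be a dominating set of least size among those contained in this
projection. Partition the vertices of `G` into pieces, each dominated by its own `i ∈ U`. Call a
cell `(i, w)` horizontally dominated if the row of `D` at height `w` dominates the whole piece of
`i`.

For fixed `i`, the heights of the points of `D` over the piece of `i`, together with the heights `w`
for which `(i, w)` is horizontally dominated, dominate `H`. These two sets overlap because `i` lies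
in the projection of `D`, so their sizes sum to at least `γ(H) + 1`. For fixed `w`, minimality of
`U` gives at most as many horizontally dominated cells as there are points of `D` in the row of `w`.
Summing over `i` yields `|U| (γ(H) + 1) ≤ 2 |D|`.
-/

open SimpleGraph

/-- `S` is a dominating set of `G`. -/
def IsDomSet {V : Type*} (G : SimpleGraph V) (S : Set V) : Prop :=
  ∀ v : V, v ∈ S ∨ ∃ u ∈ S, G.Adj u v

/-- The domination number of a finite graph. -/
noncomputable def domNum {V : Type*} [Fintype V] (G : SimpleGraph V) : ℕ :=
  sInf {n | ∃ S : Finset V, IsDomSet G ↑S ∧ S.card = n}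

/-- `Γ` is a minimum dominating set of `G`. -/
def IsMinDomSet {V : Type*} [Fintype V] (G : SimpleGraph V) (Γ : Finset V) : Prop :=
  IsDomSet G ↑Γ ∧ Γ.card = domNum G

/-- `G` is a cograph: it has no induced `P₄`. -/
def IsCograph {V : Type*} (G : SimpleGraph V) : Prop :=
  ¬ ∃ f : Fin 4 ↪ V, ∀ a b : Fin 4, (pathGraph 4).Adj a b ↔ G.Adj (f a) (f b)

/-- `w` is a private neighbor of `v` with respect to `Γ`. -/
def PrivNbr {V : Type*} (G : SimpleGraph V) (Γ : Set V) (v w : V) : Prop :=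
  w ∉ Γ ∧ G.Adj v w ∧ ∀ u ∈ Γ, G.Adj u w → u = v

/-- `w` is a shared neighbor of exactly `v₁` and `v₂` within `Γ`. -/
def SharedNbr {V : Type*} (G : SimpleGraph V) (Γ : Set V) (v₁ v₂ w : V) : Prop :=
  w ∉ Γ ∧ ∀ u ∈ Γ, G.Adj u w ↔ (u = v₁ ∨ u = v₂)

/-- `S` dominates the single vertex `v`, so that `IsDomSet G S` is `∀ v, Dominates G S v`. -/
def Dominates {V : Type*} (G : SimpleGraph V) (S : Set V) (v : V) : Prop :=
  v ∈ S ∨ ∃ u ∈ S, G.Adj u v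

/-- The domination number of an arbitrary graph, equal to `⊤` if no finite set is dominating. -/
noncomputable def edomNum {V : Type*} (G : SimpleGraph V) : ℕ∞ :=
  ⨅ S : {S : Set V // IsDomSet G S}, S.1.encard

/-- A partition of the vertices into pieces, each dominated by its own vertex of `U`. It is encoded
by the map `f` that sends a vertex to the element of `U` dominating its piece; the piece of `i` is
the fiber of `f` over `i`. -/
structure IsDomRetraction {V : Type*} (G : SimpleGraph V) (U : Finset V) (f : V → V) : Prop where
  mem (g : V) : f g ∈ U
  eq_or_adj (g : V) : f g = g ∨ G.Adj (f g) g
  apply_eq_self {u : V} (hu : u ∈ U) : f u = u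

/-- `S` dominates the whole piece of `i` in the partition encoded by `f`. -/
def DominatesFiber {V : Type*} (G : SimpleGraph V) (f : V → V) (S : Set V) (i : V) : Prop :=
  ∀ g, f g = i → Dominates G S g

section DominationNumber

variable {V : Type*} {G : SimpleGraph V}

theorem Dominates.mono {S T : Set V} {v : V} (h : Dominates G S v) (hST : S ⊆ T) :
    Dominates G T v :=
  h.imp (@hST v) fun ⟨u, hu, huv⟩ => ⟨u, hST hu, huv⟩

theorem isDomSet_univ (G : SimpleGraph V) : IsDomSet G Set.univ :=
  fun _ => Or.inl trivial

theorem edomNum_le_encard {S : Set V} (hS : IsDomSet G S) : edomNum G ≤ S.encard :=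
  iInf_le (fun S : {S : Set V // IsDomSet G S} => S.1.encard) ⟨S, hS⟩

theorem exists_isDomSet_encard_eq_edomNum (G : SimpleGraph V) :
    ∃ S : Set V, IsDomSet G S ∧ S.encard = edomNum G := by
  have : Nonempty {S : Set V // IsDomSet G S} := ⟨⟨Set.univ, isDomSet_univ G⟩⟩
  obtain ⟨⟨S, hS⟩, hcard⟩ :=
    ENat.exists_eq_iInf fun S : {S : Set V // IsDomSet G S} => S.1.encard
  exact ⟨S, hS, hcard⟩

theorem edomNum_eq_zero_of_isEmpty [IsEmpty V] (G : SimpleGraph V) : edomNum G = 0 := by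
  have hempty : IsDomSet G ∅ := isEmptyElim
  simpa using edomNum_le_encard hempty

theorem coe_domNum [Fintype V] (G : SimpleGraph V) : (domNum G : ℕ∞) = edomNum G := by
  apply le_antisymm
  · obtain ⟨S, hS, hcard⟩ := exists_isDomSet_encard_eq_edomNum G
    lift S to Finset V using S.toFinite
    rw [← hcard, Set.encard_coe_eq_coe_finsetCard, Nat.cast_le]
    exact Nat.sInf_le ⟨S, hS, rfl⟩
  · have hne : {n | ∃ S : Finset V, IsDomSet G ↑S ∧ S.card = n}.Nonempty :=
      ⟨_, Finset.univ, by simpa using isDomSet_univ G, rfl⟩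
    obtain ⟨S, hS, hcard⟩ := Nat.sInf_mem hne
    rw [domNum, ← hcard, ← Set.encard_coe_eq_coe_finsetCard]
    exact edomNum_le_encard hS

theorem IsDomSet.exists_isDomRetraction {U : Finset V} (hU : IsDomSet G ↑U) :
    ∃ f, IsDomRetraction G U f := by
  have hdominator (g : V) : ∃ u ∈ U, (u = g ∨ G.Adj u g) ∧ (g ∈ U → u = g) := by
    by_cases hg : g ∈ U
    · exact ⟨g, hg, Or.inl rfl, fun _ => rfl⟩
    · obtain ⟨u, hu, hug⟩ := (hU g).resolve_left hg
      exact ⟨u, hu, Or.inr hug, fun h => absurd h hg⟩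
  choose f hmem hadj hself using hdominator
  exact ⟨f, hmem, hadj, hself _⟩

theorem IsDomSet.exists_min_subset {X : Finset V} (hX : IsDomSet G ↑X) :
    ∃ U ⊆ X, IsDomSet G ↑U ∧ ∀ S ⊆ X, IsDomSet G ↑S → U.card ≤ S.card := by
  classical
  obtain ⟨U, hU, hmin⟩ := Finset.exists_min_image
    ({S ∈ X.powerset | IsDomSet G ↑S} : Finset (Finset V)) Finset.card ⟨X, by simp [hX]⟩
  simp only [Finset.mem_filter, Finset.mem_powerset, and_imp] at hU hmin
  exact ⟨U, hU.1, hU.2, hmin⟩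

end DominationNumber

theorem sum_card_image_fiber_le {α β γ : Type*} [DecidableEq β] [DecidableEq γ]
    (s : Finset α) (t : Finset β) (g : α → β) (π : α → γ) :
    ∑ b ∈ t, (({a ∈ s | g a = b} : Finset α).image π).card ≤ s.card :=
  calc ∑ b ∈ t, (({a ∈ s | g a = b} : Finset α).image π).card
      ≤ ∑ b ∈ t, ({a ∈ s | g a = b} : Finset α).card :=
        Finset.sum_le_sum fun _ _ => Finset.card_image_le
    _ = ({a ∈ s | g a ∈ t} : Finset α).card := Finset.sum_card_fiberwise_eq_card_filter s t g
    _ ≤ s.card := Finset.card_filter_le _ _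

theorem edomNum_add_one_le_card_add_card {W : Type*} [DecidableEq W] {H : SimpleGraph W}
    {A B : Finset W} (hdom : IsDomSet H ↑(A ∪ B)) (hAB : (A ∩ B).Nonempty) :
    edomNum H + 1 ≤ A.card + B.card := by
  have hunion : edomNum H ≤ (A ∪ B).card := by
    simpa only [Set.encard_coe_eq_coe_finsetCard] using edomNum_le_encard hdom
  calc edomNum H + 1 ≤ (A ∪ B).card + (A ∩ B).card :=
        add_le_add hunion (by exact_mod_cast hAB.card_pos)
    _ = A.card + B.card := by exact_mod_cast Finset.card_union_add_card_inter A B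

/-- Otherwise exchanging the vertices of `U` whose pieces `Q` dominates for `Q` itself would yield a
smaller dominating set. -/
theorem IsDomRetraction.card_dominatesFiber_le {V : Type*} [DecidableEq V] {G : SimpleGraph V}
    {U Q : Finset V} {f : V → V} [DecidablePred (DominatesFiber G f Q)]
    (hf : IsDomRetraction G U f) (hmin : ∀ S ⊆ Q ∪ U, IsDomSet G ↑S → U.card ≤ S.card) :
    ({i ∈ U | DominatesFiber G f Q i} : Finset V).card ≤ Q.card := by
  set K : Finset V := {i ∈ U | ¬ DominatesFiber G f Q i} with hK
  have hdom : IsDomSet G ↑(Q ∪ K) := by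
    intro g
    by_cases hQ : DominatesFiber G f Q (f g)
    · exact (hQ g rfl).mono (by simp)
    · have hmem : f g ∈ Q ∪ K := by simp [hK, hf.mem g, hQ]
      rcases hf.eq_or_adj g with heq | hadj
      · exact Or.inl (heq ▸ hmem)
      · exact Or.inr ⟨f g, hmem, hadj⟩
  have hexchange : U.card ≤ Q.card + K.card :=
    (hmin _ (Finset.union_subset_union_right (Finset.filter_subset _ _)) hdom).trans
      (Finset.card_union_le Q K)
  have hsplit : ({i ∈ U | DominatesFiber G f Q i} : Finset V).card + K.card = U.card :=
    Finset.card_filter_add_card_filter_not _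
  omega

section BoxProd

variable {V W : Type*} {G : SimpleGraph V} {H : SimpleGraph W} {D : Finset (V × W)}
  {U : Finset V} {f : V → V}

section Rows

variable [DecidableEq V] [DecidableEq W]

/-- The first coordinates of the points of `D` at height `w`. -/
def row (D : Finset (V × W)) (w : W) : Finset V :=
  ({p ∈ D | p.2 = w} : Finset (V × W)).image Prod.fst

/-- The second coordinates of the points of `D` lying over the piece of `i` in the partition
encoded by `f`. -/
def fiberColumn (D : Finset (V × W)) (f : V → V) (i : V) : Finset W :=
  ({p ∈ D | f p.1 = i} : Finset (V × W)).image Prod.snd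

open scoped Classical in
/-- The heights `w` at which the row of `D` dominates the whole piece of `i` in the partition
encoded by `f`. Only heights that occur in `D` are considered, which keeps the set finite. -/
noncomputable def dominatedHeights (G : SimpleGraph V) (D : Finset (V × W)) (f : V → V) (i : V) :
    Finset W :=
  {w ∈ D.image Prod.snd | DominatesFiber G f (row D w) i}

theorem mem_row {v : V} {w : W} : v ∈ row D w ↔ (v, w) ∈ D := by
  simp [row]

theorem mem_fiberColumn {i : V} {w : W} : w ∈ fiberColumn D f i ↔ ∃ v, (v, w) ∈ D ∧ f v = i := by
  simp [fiberColumn]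

theorem mem_dominatedHeights {i : V} {w : W} :
    w ∈ dominatedHeights G D f i ↔ w ∈ D.image Prod.snd ∧ DominatesFiber G f (row D w) i := by
  simp only [dominatedHeights, Finset.mem_filter]

theorem row_subset_image_fst (D : Finset (V × W)) (w : W) : row D w ⊆ D.image Prod.fst :=
  Finset.image_subset_image (Finset.filter_subset _ _)

theorem Dominates.mem_image_snd {g : V} {w : W} (h : Dominates G (row D w) g) :
    w ∈ D.image Prod.snd := by
  have hne : ∃ v, v ∈ row D w := h.elim (fun hg => ⟨g, hg⟩) fun ⟨u, hu, _⟩ => ⟨u, hu⟩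
  obtain ⟨v, hv⟩ := hne
  exact Finset.mem_image_of_mem Prod.snd (mem_row.1 hv)

theorem Dominates.row_or_exists_adj {g : V} {w : W} (h : Dominates (G □ H) ↑D (g, w)) :
    Dominates G (row D w) g ∨ ∃ v, (g, v) ∈ D ∧ H.Adj v w := by
  rcases h with hmem | ⟨⟨u, v⟩, huv, hadj⟩
  · exact Or.inl (Or.inl (mem_row.2 hmem))
  · rcases boxProd_adj.1 hadj with ⟨hug, rfl⟩ | ⟨hvw, rfl⟩
    · exact Or.inl (Or.inr ⟨u, mem_row.2 huv, hug⟩)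
    · exact Or.inr ⟨v, huv, hvw⟩

theorem IsDomSet.fiberColumn_union_dominatedHeights (hD : IsDomSet (G □ H) ↑D) {i : V}
    (hi : f i = i) : IsDomSet H ↑(fiberColumn D f i ∪ dominatedHeights G D f i) := by
  intro w
  by_cases hcol : ∃ v ∈ fiberColumn D f i, H.Adj v w
  · obtain ⟨v, hv, hvw⟩ := hcol
    exact Or.inr ⟨v, Finset.mem_union_left _ hv, hvw⟩
  · have hfiber : DominatesFiber G f (row D w) i := fun g hg =>
      (Dominates.row_or_exists_adj (hD (g, w))).resolve_right fun ⟨v, hv, hvw⟩ =>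
        hcol ⟨v, mem_fiberColumn.2 ⟨g, hv, hg⟩, hvw⟩
    exact Or.inl (Finset.mem_union_right _
      (mem_dominatedHeights.2 ⟨(hfiber i hi).mem_image_snd, hfiber⟩))

theorem IsDomRetraction.fiberColumn_inter_dominatedHeights_nonempty (hf : IsDomRetraction G U f)
    {i : V} (hi : i ∈ U) (hiD : i ∈ D.image Prod.fst) :
    (fiberColumn D f i ∩ dominatedHeights G D f i).Nonempty := by
  obtain ⟨⟨v, w⟩, hvw, rfl⟩ := Finset.mem_image.1 hiD
  have hfiber : DominatesFiber G f (row D w) v := by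
    rintro g rfl
    rcases hf.eq_or_adj g with heq | hadj
    · exact Or.inl (mem_row.2 (heq ▸ hvw))
    · exact Or.inr ⟨f g, mem_row.2 hvw, hadj⟩
  exact ⟨w, Finset.mem_inter.2 ⟨mem_fiberColumn.2 ⟨v, hvw, hf.apply_eq_self hi⟩,
    mem_dominatedHeights.2 ⟨Finset.mem_image_of_mem Prod.snd hvw, hfiber⟩⟩⟩

theorem IsDomRetraction.sum_card_dominatedHeights_le (hf : IsDomRetraction G U f)
    (hUD : U ⊆ D.image Prod.fst)
    (hmin : ∀ S ⊆ D.image Prod.fst, IsDomSet G ↑S → U.card ≤ S.card) :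
    ∑ i ∈ U, (dominatedHeights G D f i).card ≤ D.card := by
  classical
  calc ∑ i ∈ U, (dominatedHeights G D f i).card
      = ∑ w ∈ D.image Prod.snd, ({i ∈ U | DominatesFiber G f (row D w) i} : Finset V).card :=
        Finset.sum_card_bipartiteAbove_eq_sum_card_bipartiteBelow
          fun i w => DominatesFiber G f (row D w) i
    _ ≤ ∑ w ∈ D.image Prod.snd, (row D w).card :=
        Finset.sum_le_sum fun w _ => hf.card_dominatesFiber_le fun S hS =>
          hmin S (hS.trans (Finset.union_subset (row_subset_image_fst D w) hUD))
    _ ≤ D.card := sum_card_image_fiber_le D _ Prod.snd Prod.fst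

end Rows

theorem IsDomSet.image_fst [DecidableEq V] [Nonempty W] (hD : IsDomSet (G □ H) ↑D) :
    IsDomSet G ↑(D.image Prod.fst) := by
  classical
  intro g
  obtain ⟨w⟩ := ‹Nonempty W›
  rcases Dominates.row_or_exists_adj (hD (g, w)) with hrow | ⟨v, hv, -⟩
  · exact hrow.mono (row_subset_image_fst D w)
  · exact Or.inl (Finset.mem_image_of_mem Prod.fst hv)

theorem IsDomRetraction.card_mul_edomNum_add_one_le [DecidableEq V] (hf : IsDomRetraction G U f)
    (hD : IsDomSet (G □ H) ↑D) (hUD : U ⊆ D.image Prod.fst)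
    (hmin : ∀ S ⊆ D.image Prod.fst, IsDomSet G ↑S → U.card ≤ S.card) :
    U.card * (edomNum H + 1) ≤ 2 * D.card := by
  classical
  have hcolumns : ∑ i ∈ U, (fiberColumn D f i).card ≤ D.card :=
    sum_card_image_fiber_le D U (fun p => f p.1) Prod.snd
  have hheights := hf.sum_card_dominatedHeights_le hUD hmin
  calc (U.card : ℕ∞) * (edomNum H + 1)
      = ∑ _i ∈ U, (edomNum H + 1) := by rw [Finset.sum_const, nsmul_eq_mul]
    _ ≤ ∑ i ∈ U, ((fiberColumn D f i).card + (dominatedHeights G D f i).card : ℕ∞) :=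
        Finset.sum_le_sum fun i hi => edomNum_add_one_le_card_add_card
          (hD.fiberColumn_union_dominatedHeights (hf.apply_eq_self hi))
          (hf.fiberColumn_inter_dominatedHeights_nonempty hi (hUD hi))
    _ = (∑ i ∈ U, (fiberColumn D f i).card + ∑ i ∈ U, (dominatedHeights G D f i).card : ℕ) := by
        push_cast
        exact Finset.sum_add_distrib
    _ ≤ 2 * D.card := by
        norm_cast
        omega

theorem edomNum_mul_edomNum_add_one_le [Nonempty W] (G : SimpleGraph V) (H : SimpleGraph W) :
    edomNum G * (edomNum H + 1) ≤ 2 * edomNum (G □ H) := by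
  classical
  obtain ⟨D, hD, hcard⟩ := exists_isDomSet_encard_eq_edomNum (G □ H)
  rw [← hcard]
  rcases D.finite_or_infinite with hfin | hinf
  · lift D to Finset (V × W) using hfin
    obtain ⟨U, hUD, hU, hmin⟩ := hD.image_fst.exists_min_subset
    obtain ⟨f, hf⟩ := hU.exists_isDomRetraction
    calc edomNum G * (edomNum H + 1) ≤ (U : Set V).encard * (edomNum H + 1) := by
          gcongr
          exact edomNum_le_encard hU
      _ ≤ 2 * (D : Set (V × W)).encard := by
          simpa only [Set.encard_coe_eq_coe_finsetCard] using
            hf.card_mul_edomNum_add_one_le hD hUD hmin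
  · simp [hinf.encard_eq]

end BoxProd

theorem suen_tarr_bound_general {V W : Type*} (G : SimpleGraph V) (H : SimpleGraph W) :
    edomNum G * edomNum H + min (edomNum G) (edomNum H) ≤ 2 * edomNum (G □ H) := by
  rcases isEmpty_or_nonempty W with hW | hW
  · simp [edomNum_eq_zero_of_isEmpty H]
  · calc edomNum G * edomNum H + min (edomNum G) (edomNum H)
        ≤ edomNum G * edomNum H + edomNum G := by
          gcongr
          exact min_le_left _ _
      _ = edomNum G * (edomNum H + 1) := (mul_add_one _ _).symm
      _ ≤ 2 * edomNum (G □ H) := edomNum_mul_edomNum_add_one_le G H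

theorem suen_tarr_bound {V W : Type*} [Fintype V] [Fintype W]
    (G : SimpleGraph V) (H : SimpleGraph W) :
    2 * domNum (G.boxProd H) ≥ domNum G * domNum H + min (domNum G) (domNum H) := by
  have hbound := suen_tarr_bound_general G H
  simp only [← coe_domNum, ← (Nat.mono_cast (α := ℕ∞)).map_min] at hbound
  exact_mod_cast hbound
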